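/- 0 is an eigenvalue of the adjacency matrix of Γ(R) (over ℝ) with multiplicity at least p² − p − 1. -/

import Mathlib

/- `Rng p` models the ring `R = 𝔽_p[u,v]/⟨u², v², uv - vu⟩`:
every element is uniquely `a + b·u + c·v + d·uv` with `a b c d : ZMod p`. -/
set_option synthInstance.maxHeartbeats 1000000
set_option maxHeartbeats 1000000

abbrev Rng (p : ℕ) : Type := DualNumber (DualNumber (ZMod p))

/-- The element `u` of `R` (satisfies `u² = 0`). -/
def uu (p : ℕ) : Rng p := TrivSqZeroExt.inl DualNumber.eps

/-- The element `v` of `R` (satisfies `v² = 0`). -/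
def vv (p : ℕ) : Rng p := DualNumber.eps

/-- The vertex set `Z*(R)`: nonzero zero-divisors of `R`. -/
abbrev Vtx (p : ℕ) : Type := {x : Rng p // x ≠ 0 ∧ ∃ y : Rng p, y ≠ 0 ∧ x * y = 0}

/-- The zero-divisor graph `Γ(R)`. -/
def ZDG (p : ℕ) : SimpleGraph (Vtx p) where
  Adj a b := a ≠ b ∧ (a : Rng p) * (b : Rng p) = 0
  symm := ⟨fun a b h => ⟨h.1.symm, (mul_comm (b : Rng p) (a : Rng p)).trans h.2⟩⟩
  loopless := ⟨fun a h => h.1 rfl⟩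

instance (p : ℕ) : DecidableEq (Rng p) :=
  inferInstanceAs (DecidableEq ((ZMod p × ZMod p) × ZMod p × ZMod p))

instance (p : ℕ) [NeZero p] : Fintype (Rng p) :=
  inferInstanceAs (Fintype ((ZMod p × ZMod p) × ZMod p × ZMod p))

instance (p : ℕ) : DecidableRel (ZDG p).Adj :=
  fun a b => inferInstanceAs (Decidable (a ≠ b ∧ (a : Rng p) * (b : Rng p) = 0))

/-- The adjacency matrix of `Γ(R)` over `ℝ`. -/
def adjMat (p : ℕ) : Matrix (Vtx p) (Vtx p) ℝ :=
  fun a b => if (ZDG p).Adj a b then 1 else 0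

/-!
Let `F` be a field with `q` elements, `q` odd, let `R = F[u, v]/(u², v²)`, and call `s` the slope of
`t (u + s v) + d uv` when `s` and `t` are units. The annihilator of such an element consists of the
`b u + c v + e uv` with `b s + c = 0`, so it depends on the slope alone, and it does not contain the
element itself since `2 s t ≠ 0`. Thus elements of the same slope are non-adjacent with equal
neighbourhoods, and the corresponding columns of the adjacency matrix coincide. There are
`q (q - 1)²` such columns but only `q - 1` slopes, so the nullity is at least
`q (q - 1)² - (q - 1) = (q - 1) (q² - q - 1)`.
-/

section RepeatedColumns

open Matrix

variable {K m n ι κ : Type*} [Fintype n] [Fintype ι] [Fintype κ]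

theorem mulVec_extend_zero [NonUnitalNonAssocSemiring K] (M : Matrix m n K) {f : ι → n}
    (hf : f.Injective) (x : ι → K) : M *ᵥ Function.extend f x 0 = M.submatrix id f *ᵥ x := by
  funext i
  refine (Fintype.sum_of_injective f hf _ _ (fun j hj ↦ ?_) fun k ↦ ?_).symm
  · rw [Function.extend_apply' _ _ _ hj, Pi.zero_apply, mul_zero]
  · exact congrArg (M i (f k) * ·) (hf.extend_apply x 0 k).symm

variable [Field K]

theorem finrank_ker_mulVecLin_submatrix_le (M : Matrix m n K) {f : ι → n} (hf : f.Injective) :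
    Module.finrank K (M.submatrix id f).mulVecLin.ker ≤ Module.finrank K M.mulVecLin.ker := by
  have extend_mem_ker : ∀ x ∈ (M.submatrix id f).mulVecLin.ker,
      Function.ExtendByZero.linearMap K f x ∈ M.mulVecLin.ker :=
    fun x hx ↦ (mulVec_extend_zero M hf x).trans hx
  refine LinearMap.finrank_le_finrank_of_injective
    (f := (Function.ExtendByZero.linearMap K f).restrict extend_mem_ker) fun x y hxy ↦ ?_
  exact Subtype.ext (Function.extend_injective hf (0 : n → K) (congrArg Subtype.val hxy))

theorem card_sub_card_le_finrank_ker_of_submatrix_eq {M : Matrix m n K} {N : Matrix m κ K}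
    {f : ι → n} (hf : f.Injective) (g : ι → κ) (hcol : M.submatrix id f = N.submatrix id g) :
    Fintype.card ι - Fintype.card κ ≤ Module.finrank K M.mulVecLin.ker := by
  have rank_le : (M.submatrix id f).rank ≤ Fintype.card κ :=
    hcol ▸ (rank_submatrix_le N id g).trans N.rank_le_card_width
  have rank_add_nullity : (M.submatrix id f).rank +
      Module.finrank K (M.submatrix id f).mulVecLin.ker = Fintype.card ι :=
    (M.submatrix id f).mulVecLin.finrank_range_add_finrank_ker.trans
      (Module.finrank_fintype_fun_eq_card K)
  have nullity_le := finrank_ker_mulVecLin_submatrix_le M hf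
  omega

end RepeatedColumns

/-- The set `Z*(R)` of nonzero zero-divisors of a commutative ring; `Vtx p` is the case
`R = Rng p`. -/
abbrev NonzeroZeroDivisor (R : Type*) [CommRing R] : Type _ :=
  {x : R // x ≠ 0 ∧ ∃ y : R, y ≠ 0 ∧ x * y = 0}

/-- The zero-divisor graph `Γ(R)` of a commutative ring; `ZDG p` is the case `R = Rng p`. -/
def zeroDivisorGraph (R : Type*) [CommRing R] : SimpleGraph (NonzeroZeroDivisor R) where
  Adj x y := x ≠ y ∧ (x : R) * y = 0
  symm := ⟨fun x y h ↦ ⟨h.1.symm, (mul_comm (y : R) x).trans h.2⟩⟩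
  loopless := ⟨fun _ h ↦ h.1 rfl⟩

theorem adjMat_eq_adjMatrix (p : ℕ) [DecidableRel (zeroDivisorGraph (Rng p)).Adj] :
    adjMat p = (zeroDivisorGraph (Rng p)).adjMatrix ℝ := by
  ext x y
  rw [SimpleGraph.adjMatrix_apply]
  exact if_congr Iff.rfl rfl rfl

section Slope

open TrivSqZeroExt

variable {R : Type*} [CommRing R]

/-- The nilpotent element `t (u + s v) + d uv` of `R[u, v]/(u², v²)`, with slope `s` and leading
coefficient `t`. Here `u` is the inner and `v` the outer dual unit, so the coefficients of
`1, u, v, uv` in `x` are `x.fst.fst, x.fst.snd, x.snd.fst, x.snd.snd`. -/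
def nilpotentOfSlope (s t : Rˣ) (d : R) : DualNumber (DualNumber R) :=
  inl (inr (t : R)) + inr (inl (t * s : R) + inr d)

theorem mul_nilpotentOfSlope_eq_zero_iff (x : DualNumber (DualNumber R)) (s t : Rˣ) (d : R) :
    x * nilpotentOfSlope s t d = 0 ↔ x.fst.fst = 0 ∧ x.fst.snd * s + x.snd.fst = 0 := by
  have mul_eq_zero_iff_coeffs : x * nilpotentOfSlope s t d = 0 ↔ x.fst.fst * t = 0 ∧
      x.fst.fst * (t * s) = 0 ∧ x.fst.fst * d + x.fst.snd * (t * s) + t * x.snd.fst = 0 := by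
    simp [nilpotentOfSlope, TrivSqZeroExt.ext_iff]
  rw [mul_eq_zero_iff_coeffs, Units.mul_left_eq_zero]
  constructor
  · rintro ⟨ha, -, huv⟩
    refine ⟨ha, t.mul_left_eq_zero.1 ?_⟩
    linear_combination huv - d * ha
  · rintro ⟨ha, hslope⟩
    refine ⟨ha, ?_, ?_⟩
    · rw [ha, zero_mul]
    · linear_combination d * ha + t * hslope

theorem nilpotentOfSlope_ne_zero [Nontrivial R] (s t : Rˣ) (d : R) :
    nilpotentOfSlope s t d ≠ 0 := fun h ↦
  t.ne_zero (by simpa [nilpotentOfSlope] using congrArg (fun x ↦ x.fst.snd) h)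

theorem nilpotentOfSlope_mul_nilpotentOfSlope_neg (s t t' : Rˣ) (d d' : R) :
    nilpotentOfSlope s t d * nilpotentOfSlope (-s) t' d' = 0 := by
  rw [mul_nilpotentOfSlope_eq_zero_iff]
  simp [nilpotentOfSlope]

theorem nilpotentOfSlope_mul_self_ne_zero (h2 : (2 : R) ≠ 0) (s t : Rˣ) (d : R) :
    nilpotentOfSlope s t d * nilpotentOfSlope s t d ≠ 0 := by
  rw [Ne, mul_nilpotentOfSlope_eq_zero_iff]
  simpa [nilpotentOfSlope, ← two_mul, ← mul_assoc] using h2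

/-- The elements `t (u + s v) + d uv` as vertices of the zero-divisor graph, indexed by
`(s, t, d)`. -/
def slopeVertex [Nontrivial R] (i : Rˣ × Rˣ × R) :
    NonzeroZeroDivisor (DualNumber (DualNumber R)) :=
  ⟨nilpotentOfSlope i.1 i.2.1 i.2.2, nilpotentOfSlope_ne_zero _ _ _,
    nilpotentOfSlope (-i.1) 1 0, nilpotentOfSlope_ne_zero _ _ _,
    nilpotentOfSlope_mul_nilpotentOfSlope_neg _ _ _ _ _⟩

theorem slopeVertex_injective [Nontrivial R] : (slopeVertex (R := R)).Injective := by
  rintro ⟨s, t, d⟩ ⟨s', t', d'⟩ h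
  have hval : nilpotentOfSlope s t d = nilpotentOfSlope s' t' d' := congrArg Subtype.val h
  obtain ⟨ht, hts, rfl⟩ : (t : R) = t' ∧ (t * s : R) = t' * s' ∧ d = d' := by
    simpa [nilpotentOfSlope, TrivSqZeroExt.ext_iff] using hval
  obtain rfl := Units.ext ht
  obtain rfl := Units.ext (t.mul_right_inj.1 hts)
  rfl

theorem zeroDivisorGraph_adj_slopeVertex_iff [Nontrivial R] (h2 : (2 : R) ≠ 0)
    (x : NonzeroZeroDivisor (DualNumber (DualNumber R))) (i : Rˣ × Rˣ × R) :
    (zeroDivisorGraph (DualNumber (DualNumber R))).Adj x (slopeVertex i) ↔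
      x.1.fst.fst = 0 ∧ x.1.fst.snd * i.1 + x.1.snd.fst = 0 := by
  rw [← mul_nilpotentOfSlope_eq_zero_iff x.1 i.1 i.2.1 i.2.2]
  refine and_iff_right_of_imp ?_
  rintro hmul rfl
  exact nilpotentOfSlope_mul_self_ne_zero h2 _ _ _ hmul

end Slope

theorem card_units_prod_units_prod_sub_card_units (F : Type*) [Field F] [Fintype F]
    [DecidableEq F] :
    Fintype.card (Fˣ × Fˣ × F) - Fintype.card Fˣ =
      (Fintype.card F - 1) * (Fintype.card F ^ 2 - Fintype.card F - 1) := by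
  rw [Fintype.card_prod, Fintype.card_prod, Fintype.card_units, sq, ← Nat.sub_one_mul,
    Nat.mul_sub_one]

theorem stmt13_general (F K : Type*) [Field F] [Fintype F] [Field K] (hF : ringChar F ≠ 2)
    [Fintype (NonzeroZeroDivisor (DualNumber (DualNumber F)))]
    [DecidableEq (NonzeroZeroDivisor (DualNumber (DualNumber F)))]
    [DecidableRel (zeroDivisorGraph (DualNumber (DualNumber F))).Adj] :
    (Fintype.card F - 1) * (Fintype.card F ^ 2 - Fintype.card F - 1) ≤
      Module.finrank K (Module.End.eigenspace
        (Matrix.toLin' ((zeroDivisorGraph (DualNumber (DualNumber F))).adjMatrix K)) (0 : K)) := by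
  classical
  let slopeMatrix : Matrix (NonzeroZeroDivisor (DualNumber (DualNumber F))) Fˣ K :=
    Matrix.of fun x s ↦ if x.1.fst.fst = 0 ∧ x.1.fst.snd * s + x.1.snd.fst = 0 then 1 else 0
  have hcol : ((zeroDivisorGraph (DualNumber (DualNumber F))).adjMatrix K).submatrix id slopeVertex
      = slopeMatrix.submatrix id Prod.fst := by
    ext x i
    simp [slopeMatrix, zeroDivisorGraph_adj_slopeVertex_iff (Ring.two_ne_zero hF)]
  rw [Module.End.eigenspace_zero, Matrix.toLin'_apply',
    ← card_units_prod_units_prod_sub_card_units]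
  exact card_sub_card_le_finrank_ker_of_submatrix_eq slopeVertex_injective Prod.fst hcol

theorem stmt13 (p : ℕ) [Fact p.Prime] (hodd : Odd p) :
    p ^ 2 - p - 1 ≤ Module.finrank ℝ
      (Module.End.eigenspace (Matrix.toLin' (adjMat p)) (0 : ℝ)) := by
  classical
  have hchar : ringChar (ZMod p) ≠ 2 :=
    (ZMod.ringChar_zmod_n p).trans_ne (hodd.ne_two_of_dvd_nat dvd_rfl)
  have hp : 0 < p - 1 := Nat.sub_pos_of_lt (Fact.out : p.Prime).one_lt
  have hbound := stmt13_general (ZMod p) ℝ hchar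
  rw [ZMod.card, ← adjMat_eq_adjMatrix] at hbound
  exact (Nat.le_mul_of_pos_left _ hp).trans hbound
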